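/- Let f be an inner function with f(0)=0, and let 𝒜_1,…,𝒜_p be finite sets of positive integers with max 𝒜_k < min 𝒜_{k+1} for k=1,…,p−1. Let {a_n} be complex numbers and ξ_k = Σ_{n∈𝒜_k} a_n f^n. Then ∫_{∂𝔻} ∏_{k=1}^p |ξ_k|² dm = ∏_{k=1}^p ∫_{∂𝔻} |ξ_k|² dm; i.e., the squared moduli of partial sums over separated blocks are uncorrelated. -/

import Mathlib

open MeasureTheory Set Metric Filter Complex

/-- Normalized Lebesgue (arc-length) measure on the unit circle, as a measure on ℂ. -/
noncomputable def m : Measure ℂ :=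
  (ENNReal.ofReal (2 * Real.pi))⁻¹ •
    (Measure.map (fun θ : ℝ => Complex.exp ((θ : ℂ) * Complex.I))
      (volume.restrict (Set.Ioc (0:ℝ) (2 * Real.pi))))

/-- `spow F ε n` is `F^[n]` if `ε = 1` and its complex conjugate if `ε = -1`. -/
noncomputable def spow (F : ℂ → ℂ) (ε : ℤ) (n : ℕ) (z : ℂ) : ℂ :=
  if ε = 1 then F^[n] z else (starRingEnd ℂ) (F^[n] z)

instance isProbabilityMeasure_m : IsProbabilityMeasure m := by
  constructor
  rw [m, Measure.smul_apply, Measure.map_apply (by fun_prop) MeasurableSet.univ]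
  simp only [preimage_univ, Measure.restrict_apply_univ, Real.volume_Ioc, sub_zero, smul_eq_mul]
  exact ENNReal.inv_mul_cancel (by simp [Real.pi_pos]) ENNReal.ofReal_ne_top

theorem ae_norm_eq_one : ∀ᵐ z ∂m, ‖z‖ = 1 := by
  rw [m]
  refine Measure.ae_smul_measure ?_ _
  rw [ae_map_iff (by fun_prop) (measurableSet_eq_fun (by fun_prop) (by fun_prop))]
  exact ae_of_all _ fun θ => norm_exp_ofReal_mul_I θ

theorem ContinuousOn.aestronglyMeasurable_m {g : ℂ → ℂ}
    (hg : ContinuousOn g (sphere 0 1)) : AEStronglyMeasurable g m := by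
  have h : m.restrict (sphere 0 1) = m :=
    Measure.restrict_eq_self_of_ae_mem (by simpa using ae_norm_eq_one)
  rw [← h]
  exact hg.aestronglyMeasurable isClosed_sphere.measurableSet

theorem integral_m_comp_mul {g : ℂ → ℂ} {r : ℝ} (hr : 0 ≤ r)
    (hg : ContinuousOn g (closedBall 0 r)) :
    ∫ z, g (r * z) ∂m = Real.circleAverage g 0 r := by
  have hmaps : MapsTo (fun z : ℂ => (r : ℂ) * z) (sphere 0 1) (closedBall 0 r) := by
    intro z hz
    simp only [mem_sphere_iff_norm, sub_zero] at hz
    simp [hz, abs_of_nonneg hr]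
  have hgm : AEStronglyMeasurable (fun z => g (r * z)) m :=
    (hg.comp (by fun_prop) hmaps).aestronglyMeasurable_m
  have hgm' : AEStronglyMeasurable (fun z => g (r * z))
      (Measure.map (fun θ : ℝ => Complex.exp ((θ : ℂ) * Complex.I))
        (volume.restrict (Set.Ioc (0:ℝ) (2 * Real.pi)))) := by
    refine hgm.mono_ac ?_
    rw [m]
    exact Measure.absolutelyContinuous_smul (ENNReal.inv_ne_zero.2 ENNReal.ofReal_ne_top)
  rw [m, integral_smul_measure, integral_map (by fun_prop) hgm', Real.circleAverage_def,
    intervalIntegral.integral_of_le (by positivity)]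
  simp [circleMap, ENNReal.toReal_ofReal Real.pi_pos.le]

/-- Mean value property for boundary values of a bounded holomorphic function on the disc. -/
theorem integral_radial_limit {g G : ℂ → ℂ} {C : ℝ} (hg : DifferentiableOn ℂ g (ball 0 1))
    (hC : ∀ z ∈ ball (0 : ℂ) 1, ‖g z‖ ≤ C)
    (hG : ∀ᵐ z ∂m, Tendsto (fun r : ℝ => g ((r : ℂ) * z)) (nhdsWithin 1 (Iio 1)) (nhds (G z))) :
    AEStronglyMeasurable G m ∧ ∫ z, G z ∂m = g 0 := by
  obtain ⟨u, -, hu, hlim⟩ := exists_seq_strictMono_tendsto' (show (0 : ℝ) < 1 by norm_num)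
  have hu' : Tendsto u atTop (nhdsWithin 1 (Iio 1)) :=
    tendsto_nhdsWithin_iff.2 ⟨hlim, Eventually.of_forall fun n => (hu n).2⟩
  have hcont (n : ℕ) : ContinuousOn g (closedBall 0 (u n)) :=
    hg.continuousOn.mono (closedBall_subset_ball (hu n).2)
  have hmeas (n : ℕ) : AEStronglyMeasurable (fun z => g (u n * z)) m := by
    refine ContinuousOn.aestronglyMeasurable_m ((hcont n).comp (by fun_prop) ?_)
    intro z hz
    simp only [mem_sphere_iff_norm, sub_zero] at hz
    simp [hz, abs_of_pos (hu n).1]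
  have hG' : ∀ᵐ z ∂m, Tendsto (fun n => g (u n * z)) atTop (nhds (G z)) := by
    filter_upwards [hG] with z hz using hz.comp hu'
  refine ⟨aestronglyMeasurable_of_tendsto_ae atTop hmeas hG', ?_⟩
  have hval (n : ℕ) : ∫ z, g (u n * z) ∂m = g 0 := by
    rw [integral_m_comp_mul (hu n).1.le (hcont n)]
    refine circleAverage_of_differentiable_on_off_countable countable_empty ?_ ?_
    · rw [abs_of_pos (hu n).1]
      exact hcont n
    · intro z hz
      rw [abs_of_pos (hu n).1, sdiff_empty] at hz
      exact hg.differentiableAt (isOpen_ball.mem_nhds (ball_subset_ball (hu n).2.le hz))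
  have hdct := tendsto_integral_of_dominated_convergence (fun _ => C) hmeas
    (integrable_const C) (fun n => by
      filter_upwards [ae_norm_eq_one] with z hz
      exact hC _ (by simp [hz, abs_of_pos (hu n).1, (hu n).2])) hG'
  simp only [hval] at hdct
  exact tendsto_nhds_unique hdct tendsto_const_nhds

/-- Continuous functions are uniformly approximated on the circle by Laurent polynomials. -/
theorem exists_laurent_approx {φ : ℂ → ℂ} (hφ : Continuous φ) {ε : ℝ} (hε : 0 < ε) :
    ∃ c : ℤ →₀ ℂ, ∀ z : ℂ, ‖z‖ = 1 → ‖φ z - c.sum fun k a => a * z ^ k‖ ≤ ε := by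
  have : Fact (0 < 2 * Real.pi) := ⟨Real.two_pi_pos⟩
  let ψ : C(AddCircle (2 * Real.pi), ℂ) := ⟨fun x => φ (AddCircle.toCircle x), by fun_prop⟩
  have hψ : ψ ∈ (Submodule.span ℂ
      (range <| @fourier (2 * Real.pi))).topologicalClosure := by
    rw [span_fourier_closure_eq_top]; trivial
  obtain ⟨P, hP, hd⟩ := Metric.mem_closure_iff.1 hψ ε hε
  obtain ⟨c, rfl⟩ := Finsupp.mem_span_range_iff_exists_finsupp.1 hP
  refine ⟨c, fun z hz => ?_⟩
  have hz' : Complex.exp (z.arg * I) = z := by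
    simpa [hz] using norm_mul_exp_arg_mul_I z
  have h := (ContinuousMap.dist_apply_le_dist (f := ψ)
    ((z.arg : ℝ) : AddCircle (2 * Real.pi))).trans hd.le
  have hc : ((AddCircle.toCircle ((z.arg : ℝ) : AddCircle (2 * Real.pi)) : Circle) : ℂ) = z := by
    rw [AddCircle.toCircle_apply_mk, Circle.coe_exp, div_self Real.two_pi_pos.ne']
    simpa using hz'
  rw [dist_eq_norm] at h
  simpa [ψ, hc, Finsupp.sum, ContinuousMap.coe_sum, fourier_apply, AddCircle.toCircle_zsmul] using h

/-- If two weighted laws on the circle have equal Fourier coefficients, they agree on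
continuous functions. -/
theorem integral_continuous_eq_of_moments {G h h' φ : ℂ → ℂ} (hG : Measurable G)
    (hG1 : ∀ z, ‖G z‖ = 1) (hh : Integrable h m) (hh' : Integrable h' m)
    (hmom : ∀ k : ℤ, ∫ z, h z * G z ^ k ∂m = ∫ z, h' z * z ^ k ∂m) (hφ : Continuous φ) :
    ∫ z, h z * φ (G z) ∂m = ∫ z, h' z * φ z ∂m := by
  have key {u v : ℂ → ℂ} (hu : Integrable u m) (hv : Measurable v) (hv1 : ∀ᵐ z ∂m, ‖v z‖ = 1)
      {ψ : ℂ → ℂ} (hψ : Measurable ψ) {C : ℝ} (hC : ∀ z, ‖z‖ = 1 → ‖ψ z‖ ≤ C) :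
      Integrable (fun z => u z * ψ (v z)) m ∧ ‖∫ z, u z * ψ (v z) ∂m‖ ≤ (∫ z, ‖u z‖ ∂m) * C := by
    have hb : ∀ᵐ z ∂m, ‖ψ (v z)‖ ≤ C := hv1.mono fun z hz => hC _ hz
    refine ⟨hu.mul_bdd (c := C) (hψ.comp hv).aestronglyMeasurable hb, ?_⟩
    rw [← integral_mul_const]
    refine norm_integral_le_of_norm_le (hu.norm.mul_const C) ?_
    filter_upwards [hb] with z hz
    rw [norm_mul]
    gcongr
  obtain ⟨C, hC⟩ := (isCompact_sphere (0 : ℂ) 1).exists_bound_of_continuousOn hφ.continuousOn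
  replace hC : ∀ z, ‖z‖ = 1 → ‖φ z‖ ≤ C := fun z hz => hC z (by simpa using hz)
  have hid : ∀ᵐ z ∂m, ‖id z‖ = 1 := ae_norm_eq_one
  have hGa : ∀ᵐ z ∂m, ‖G z‖ = 1 := ae_of_all _ hG1
  refine eq_of_forall_dist_le fun ε hε => ?_
  set M := (∫ z, ‖h z‖ ∂m) + ∫ z, ‖h' z‖ ∂m with hM
  have hM0 : 0 ≤ M := add_nonneg (integral_nonneg fun _ => norm_nonneg _)
    (integral_nonneg fun _ => norm_nonneg _)
  obtain ⟨c, hc⟩ := exists_laurent_approx hφ (show 0 < ε / (M + 1) by positivity)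
  set P : ℂ → ℂ := fun z => c.sum fun k a => a * z ^ k with hPdef
  have hPm : Measurable P := by
    simp only [hPdef, Finsupp.sum]
    fun_prop
  have hpow {u v : ℂ → ℂ} (hu : Integrable u m) (hv : Measurable v) (hv1 : ∀ᵐ z ∂m, ‖v z‖ = 1)
      (k : ℤ) : Integrable (fun z => u z * v z ^ k) m :=
    (key hu hv hv1 (ψ := fun z => z ^ k) (C := 1) (by fun_prop)
      fun z hz => by simp [hz]).1
  have hexp (u v : ℂ → ℂ) (z : ℂ) :
      u z * P (v z) = ∑ k ∈ c.support, c k * (u z * v z ^ k) := by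
    simp only [hPdef, Finsupp.sum, Finset.mul_sum]
    exact Finset.sum_congr rfl fun k _ => mul_left_comm _ _ _
  have hsum {u v : ℂ → ℂ} (hu : Integrable u m) (hv : Measurable v) (hv1 : ∀ᵐ z ∂m, ‖v z‖ = 1) :
      ∫ z, u z * P (v z) ∂m = c.sum fun k a => a * ∫ z, u z * v z ^ k ∂m := by
    simp only [hexp, Finsupp.sum]
    rw [integral_finsetSum _ fun k _ => (hpow hu hv hv1 k).const_mul _]
    simp only [integral_const_mul]
  have hPP : ∫ z, h z * P (G z) ∂m = ∫ z, h' z * P z ∂m := by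
    have h2 := hsum hh' measurable_id hid
    simp only [id] at h2
    rw [hsum hh hG hGa, h2]
    simp only [hmom]
  have hdiff {u v : ℂ → ℂ} (hu : Integrable u m) (hv : Measurable v) (hv1 : ∀ᵐ z ∂m, ‖v z‖ = 1) :
      ‖∫ z, u z * φ (v z) ∂m - ∫ z, u z * P (v z) ∂m‖
        ≤ (∫ z, ‖u z‖ ∂m) * (ε / (M + 1)) := by
    have hPi : Integrable (fun z => u z * P (v z)) m := by
      simp only [hexp]
      exact integrable_finsetSum _ fun k _ => (hpow hu hv hv1 k).const_mul _
    rw [← integral_sub (key hu hv hv1 hφ.measurable hC).1 hPi]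
    simp only [← mul_sub]
    exact (key hu hv hv1 (ψ := fun z => φ z - P z) (hφ.measurable.sub hPm) hc).2
  have h1 := hdiff hh hG hGa
  have h2 := hdiff hh' measurable_id hid
  simp only [id] at h2
  rw [← hPP] at h2
  rw [dist_eq_norm]
  calc ‖∫ z, h z * φ (G z) ∂m - ∫ z, h' z * φ z ∂m‖
      ≤ ‖∫ z, h z * φ (G z) ∂m - ∫ z, h z * P (G z) ∂m‖
        + ‖∫ z, h' z * φ z ∂m - ∫ z, h z * P (G z) ∂m‖ := by
        rw [← sub_sub_sub_cancel_right _ _ (∫ z, h z * P (G z) ∂m)]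
        exact norm_sub_le _ _
    _ ≤ M * (ε / (M + 1)) := by rw [hM, add_mul]; exact add_le_add h1 h2
    _ ≤ ε := by
        rw [mul_div_assoc', div_le_iff₀ (by positivity)]
        nlinarith

theorem measurePreserving_of_moments {G : ℂ → ℂ} (hG : Measurable G) (hG1 : ∀ z, ‖G z‖ = 1)
    (hmom : ∀ k : ℤ, ∫ z, G z ^ k ∂m = ∫ z, z ^ k ∂m) : MeasurePreserving G m m := by
  refine ⟨hG, ?_⟩
  have := Measure.isProbabilityMeasure_map (μ := m) hG.aemeasurable
  refine ext_of_forall_integral_eq_of_IsFiniteMeasure fun φ => ?_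
  rw [integral_map hG.aemeasurable φ.continuous.aestronglyMeasurable]
  have h := integral_continuous_eq_of_moments hG hG1 (integrable_const 1) (integrable_const 1)
    (by simpa using hmom) (φ := fun z => (φ z : ℂ)) (by fun_prop)
  simp only [one_mul] at h
  rw [integral_complex_ofReal, integral_complex_ofReal] at h
  exact_mod_cast h

/-- If two bounded weights give the same Fourier coefficients along a measure-preserving map, they
give the same integrals of integrable functions. -/
theorem integral_eq_of_moments {G h h' φ : ℂ → ℂ} (hG : MeasurePreserving G m m)
    (hG1 : ∀ z, ‖G z‖ = 1) (hh : AEStronglyMeasurable h m) (hh' : AEStronglyMeasurable h' m)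
    {C : ℝ} (hC : ∀ᵐ z ∂m, ‖h z‖ ≤ C) (hC' : ∀ᵐ z ∂m, ‖h' z‖ ≤ C)
    (hmom : ∀ k : ℤ, ∫ z, h z * G z ^ k ∂m = ∫ z, h' z * z ^ k ∂m) (hφ : Integrable φ m) :
    ∫ z, h z * φ (G z) ∂m = ∫ z, h' z * φ z ∂m := by
  have hC0 : 0 ≤ C := by
    obtain ⟨z, hz⟩ := hC.exists
    exact (norm_nonneg _).trans hz
  have key {u ψ : ℂ → ℂ} (hu : AEStronglyMeasurable u m) (huC : ∀ᵐ z ∂m, ‖u z‖ ≤ C)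
      (hψ : Integrable ψ m) : Integrable (fun z => u z * ψ z) m ∧
        ‖∫ z, u z * ψ z ∂m‖ ≤ C * ∫ z, ‖ψ z‖ ∂m := by
    refine ⟨hψ.bdd_mul hu huC, ?_⟩
    rw [← integral_const_mul]
    refine norm_integral_le_of_norm_le (hψ.norm.const_mul C) ?_
    filter_upwards [huC] with z hz
    rw [norm_mul]
    gcongr
  refine eq_of_forall_dist_le fun ε hε => ?_
  obtain ⟨g, hg, hgi⟩ := hφ.exists_boundedContinuous_integral_sub_le
    (show 0 < ε / (2 * (C + 1)) by positivity)
  have hd : Integrable (fun z => φ z - g z) m := hφ.sub hgi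
  have hdG : Integrable (fun z => φ (G z) - g (G z)) m := hG.integrable_comp_of_integrable hd
  have hnorm : ∫ z, ‖φ (G z) - g (G z)‖ ∂m = ∫ z, ‖φ z - g z‖ ∂m := by
    have h1 := integral_map hG.aemeasurable (f := fun z => ‖φ z - g z‖)
      (by rw [hG.map_eq]; exact hd.norm.aestronglyMeasurable)
    rw [hG.map_eq] at h1
    exact h1.symm
  have hg' := integral_continuous_eq_of_moments hG.measurable hG1 (Integrable.of_bound hh C hC)
    (Integrable.of_bound hh' C hC') hmom g.continuous
  have e1 : ∫ z, h z * (φ (G z) - g (G z)) ∂m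
      = ∫ z, h z * φ (G z) ∂m - ∫ z, h z * g (G z) ∂m := by
    simp only [mul_sub]
    exact integral_sub (key hh hC (hG.integrable_comp_of_integrable hφ)).1
      (key hh hC (hG.integrable_comp_of_integrable hgi)).1
  have e2 : ∫ z, h' z * (φ z - g z) ∂m = ∫ z, h' z * φ z ∂m - ∫ z, h' z * g z ∂m := by
    simp only [mul_sub]
    exact integral_sub (key hh' hC' hφ).1 (key hh' hC' hgi).1
  have b1 := (key hh hC hdG).2
  have b2 := (key hh' hC' hd).2
  rw [hnorm] at b1
  rw [e1, hg'] at b1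
  rw [e2] at b2
  rw [dist_eq_norm, ← sub_sub_sub_cancel_right _ _ (∫ z, h' z * g z ∂m)]
  calc _ ≤ C * (ε / (2 * (C + 1))) + C * (ε / (2 * (C + 1))) :=
        (norm_sub_le _ _).trans (add_le_add (b1.trans (by gcongr)) (b2.trans (by gcongr)))
    _ ≤ ε := by
        rw [← two_mul, ← mul_assoc, mul_div_assoc', div_le_iff₀ (by positivity)]
        nlinarith

theorem zpow_negSucc_eq_conj {z : ℂ} (hz : ‖z‖ = 1) (k : ℕ) :
    z ^ (Int.negSucc k) = starRingEnd ℂ (z ^ (k + 1)) := by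
  rw [zpow_negSucc, Complex.inv_eq_conj (by simp [hz])]

theorem integral_pow_m (k : ℕ) : ∫ z, z ^ k ∂m = 0 ^ k := by
  refine (integral_radial_limit (g := fun z => z ^ k) (C := 1) (by fun_prop) ?_ ?_).2
  · intro z hz
    rw [norm_pow]
    exact pow_le_one₀ (norm_nonneg _) (by simpa using (mem_ball_zero_iff.1 hz).le)
  · refine ae_of_all _ fun z => tendsto_nhdsWithin_of_tendsto_nhds ?_
    have : Continuous fun r : ℝ => ((r : ℂ) * z) ^ k := by fun_prop
    simpa using this.tendsto 1

/-- An inner function fixing the origin has a measurable unimodular boundary map which preserves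
the measure `m` and for which the Koopman adjoint scales the identity function. -/
theorem exists_measurable_boundary_map {f F : ℂ → ℂ}
    (hf : DifferentiableOn ℂ f (ball 0 1)) (hmap : MapsTo f (ball 0 1) (ball 0 1)) (h0 : f 0 = 0)
    (hbd : ∀ᵐ z ∂m, Tendsto (fun r : ℝ => f ((r : ℂ) * z)) (nhdsWithin 1 (Iio 1)) (nhds (F z)))
    (hinner : ∀ᵐ z ∂m, ‖F z‖ = 1) :
    ∃ G : ℂ → ℂ, (∀ z, ‖G z‖ = 1) ∧ F =ᵐ[m] G ∧ MeasurePreserving G m m ∧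
      ∃ β : ℂ, ∀ φ : ℂ → ℂ, Integrable φ m → ∫ z, z * φ (G z) ∂m = β * ∫ z, z * φ z ∂m := by
  have hfle : ∀ z ∈ ball (0 : ℂ) 1, ‖f z‖ ≤ 1 := fun z hz => (mem_ball_zero_iff.1 (hmap hz)).le
  obtain ⟨G₀, hG₀, hFG₀⟩ : AEMeasurable F m := (integral_radial_limit hf hfle hbd).1.aemeasurable
  classical
  let G : ℂ → ℂ := fun z => if ‖G₀ z‖ = 1 then G₀ z else 1
  have hG : Measurable G :=
    hG₀.ite (measurableSet_eq_fun hG₀.norm measurable_const) measurable_const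
  have hG1 (z : ℂ) : ‖G z‖ = 1 := by
    by_cases h : ‖G₀ z‖ = 1 <;> simp [G, h]
  have hFG : F =ᵐ[m] G := by
    filter_upwards [hFG₀, hinner] with z h1 h2
    rw [h1] at h2 ⊢
    simp [G, h2]
  have hbdG : ∀ᵐ z ∂m,
      Tendsto (fun r : ℝ => f ((r : ℂ) * z)) (nhdsWithin 1 (Iio 1)) (nhds (G z)) := by
    filter_upwards [hbd, hFG] with z h1 h2
    rwa [h2] at h1
  have hr (z : ℂ) : Tendsto (fun r : ℝ => (r : ℂ) * z) (nhdsWithin 1 (Iio 1)) (nhds z) := by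
    refine tendsto_nhdsWithin_of_tendsto_nhds ?_
    have : Continuous fun r : ℝ => (r : ℂ) * z := by fun_prop
    simpa using this.tendsto 1
  have hpow (k : ℕ) : ∫ z, G z ^ k ∂m = 0 ^ k := by
    rw [← h0]
    refine (integral_radial_limit (g := fun z => f z ^ k) (C := 1) (hf.pow k) ?_ ?_).2
    · intro z hz
      rw [norm_pow]
      exact pow_le_one₀ (norm_nonneg _) (hfle z hz)
    · filter_upwards [hbdG] with z hz using hz.pow k
  have hmulpow (k : ℕ) : ∫ z, z * G z ^ k ∂m = 0 := by
    rw [← zero_mul (f 0 ^ k)]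
    refine (integral_radial_limit (g := fun z => z * f z ^ k) (C := 1)
      (differentiableOn_id.mul (hf.pow k)) ?_ ?_).2
    · intro z hz
      rw [norm_mul, norm_pow]
      exact mul_le_one₀ (mem_ball_zero_iff.1 hz).le (by positivity)
        (pow_le_one₀ (norm_nonneg _) (hfle z hz))
    · filter_upwards [hbdG] with z hz using (hr z).mul (hz.pow k)
  have hdivpow (k : ℕ) : ∫ z, z⁻¹ * G z * G z ^ k ∂m = dslope f 0 0 * 0 ^ k := by
    refine (integral_radial_limit (g := fun z => dslope f 0 z * f z ^ k) (C := 1)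
      (((differentiableOn_dslope (ball_mem_nhds 0 one_pos)).2 hf).mul (hf.pow k)) ?_ ?_).2.trans
        (by rw [h0])
    · intro z hz
      rw [norm_mul, norm_pow]
      have hq : ‖dslope f 0 z‖ ≤ 1 / 1 := norm_dslope_le_div_of_mapsTo_ball hf
        (by rw [h0]; exact hmap.mono_right ball_subset_closedBall) hz
      exact mul_le_one₀ (by simpa using hq) (by positivity)
        (pow_le_one₀ (norm_nonneg _) (hfle z hz))
    · filter_upwards [hbdG, ae_norm_eq_one] with z hz hz1
      have hz0 : z ≠ 0 := by
        rintro rfl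
        simp at hz1
      refine Tendsto.mul ?_ (hz.pow k)
      refine (((hr z).inv₀ hz0).mul hz).congr' ?_
      filter_upwards [nhdsWithin_le_nhds (lt_mem_nhds (zero_lt_one' ℝ))] with r hr0
      rw [dslope_of_ne _ (mul_ne_zero (by exact_mod_cast hr0.ne') hz0), slope_def_field, h0]
      simp [div_eq_inv_mul]
  have hmp : MeasurePreserving G m m := by
    refine measurePreserving_of_moments hG hG1 fun k => ?_
    cases k with
    | ofNat k => simpa [hpow] using (integral_pow_m k).symm
    | negSucc k =>
      have h2 : ∫ z, z ^ (Int.negSucc k) ∂m = ∫ z, starRingEnd ℂ (z ^ (k + 1)) ∂m := by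
        refine integral_congr_ae ?_
        filter_upwards [ae_norm_eq_one] with z hz using zpow_negSucc_eq_conj hz k
      rw [h2, integral_conj, integral_pow_m]
      simp only [zpow_negSucc_eq_conj (hG1 _)]
      rw [integral_conj, hpow]
  refine ⟨G, hG1, hFG, hmp, starRingEnd ℂ (dslope f 0 0), fun φ hφ => ?_⟩
  simp only [← integral_const_mul, ← mul_assoc]
  set β := starRingEnd ℂ (dslope f 0 0) with hβ
  refine integral_eq_of_moments (C := max 1 ‖β‖) hmp hG1 (by fun_prop) (by fun_prop) ?_ ?_ ?_ hφ
  · filter_upwards [ae_norm_eq_one] with z hz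
    simp [hz]
  · filter_upwards [ae_norm_eq_one] with z hz
    simp [hz]
  intro k
  simp only [mul_assoc, integral_const_mul]
  cases k with
  | ofNat k =>
    have h2 : ∫ z : ℂ, z * z ^ k ∂m = 0 := by
      simpa [pow_succ'] using integral_pow_m (k + 1)
    simp [hmulpow, h2]
  | negSucc k =>
    have h1 : ∫ z, z * G z ^ (Int.negSucc k) ∂m
        = ∫ z, starRingEnd ℂ (z⁻¹ * G z * G z ^ k) ∂m := by
      refine integral_congr_ae ?_
      filter_upwards [ae_norm_eq_one] with z hz
      rw [zpow_negSucc_eq_conj (hG1 z), Complex.inv_eq_conj hz]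
      simp [pow_succ', mul_assoc]
    have h2 : ∫ z, z * z ^ (Int.negSucc k) ∂m = ∫ z, starRingEnd ℂ (z ^ k) ∂m := by
      refine integral_congr_ae ?_
      filter_upwards [ae_norm_eq_one] with z hz
      rw [zpow_negSucc_eq_conj hz, pow_succ', map_mul, ← mul_assoc, Complex.mul_conj,
        Complex.normSq_eq_norm_sq, hz]
      simp
    rw [h1, h2, integral_conj, integral_conj, hdivpow, integral_pow_m, map_mul]

section Koopman

variable {G : ℂ → ℂ} {β : ℂ}

theorem MeasureTheory.MeasurePreserving.integral_comp_aestronglyMeasurable {α : Type*}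
    [MeasurableSpace α] {μ : Measure α} {T : α → α} (hT : MeasurePreserving T μ μ) {φ : α → ℂ}
    (hφ : AEStronglyMeasurable φ μ) : ∫ z, φ (T z) ∂μ = ∫ z, φ z ∂μ := by
  have h := integral_map hT.aemeasurable (f := φ) (by rwa [hT.map_eq])
  rw [hT.map_eq] at h
  exact h.symm

theorem integral_mul_comp_iterate (hmp : MeasurePreserving G m m)
    (hβ : ∀ φ : ℂ → ℂ, Integrable φ m → ∫ z, z * φ (G z) ∂m = β * ∫ z, z * φ z ∂m)
    (j : ℕ) {φ : ℂ → ℂ} (hφ : Integrable φ m) :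
    ∫ z, z * φ (G^[j] z) ∂m = β ^ j * ∫ z, z * φ z ∂m := by
  induction j with
  | zero => simp
  | succ j ih =>
    have h := hβ _ ((hmp.iterate j).integrable_comp_of_integrable hφ)
    simp only [Function.comp_apply] at h
    simp only [Function.iterate_succ_apply]
    rw [h, ih, pow_succ', mul_assoc]

theorem ae_norm_iterate_eq_one (hmp : MeasurePreserving G m m) (n : ℕ) :
    ∀ᵐ z ∂m, ‖G^[n] z‖ = 1 :=
  (hmp.iterate n).quasiMeasurePreserving.ae ae_norm_eq_one

/-- Given `G^[N]`, the correlation of two earlier iterates is constant. -/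
theorem integral_iterate_mul_conj_of_le (hmp : MeasurePreserving G m m)
    (hβ : ∀ φ : ℂ → ℂ, Integrable φ m → ∫ z, z * φ (G z) ∂m = β * ∫ z, z * φ z ∂m)
    {n l N : ℕ} (hnl : n ≤ l) (hlN : l ≤ N) {Ψ : ℂ → ℂ} (hΨ : Integrable Ψ m) :
    ∫ z, G^[n] z * starRingEnd ℂ (G^[l] z) * Ψ (G^[N] z) ∂m
      = β ^ (l - n) * ∫ z, Ψ z ∂m := by
  obtain ⟨j, rfl⟩ := Nat.exists_eq_add_of_le' hnl
  obtain ⟨i, rfl⟩ := Nat.exists_eq_add_of_le' hlN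
  set χ : ℂ → ℂ := fun w => starRingEnd ℂ w * Ψ (G^[i] w) with hχ
  have hΨi : Integrable (fun w => Ψ (G^[i] w)) m :=
    (hmp.iterate i).integrable_comp_of_integrable hΨ
  have hχi : Integrable χ m := by
    refine hΨi.bdd_mul (c := 1) (by fun_prop) ?_
    filter_upwards [ae_norm_eq_one] with z hz
    simp [hz]
  have hid : Integrable (fun z => z * χ (G^[j] z)) m := by
    refine ((hmp.iterate j).integrable_comp_of_integrable hχi).bdd_mul (c := 1) (by fun_prop) ?_
    filter_upwards [ae_norm_eq_one] with z hz
    simp [hz]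
  have h1 : ∫ z, G^[n] z * starRingEnd ℂ (G^[j + n] z) * Ψ (G^[i + (j + n)] z) ∂m
      = ∫ z, z * χ (G^[j] z) ∂m := by
    rw [← (hmp.iterate n).integral_comp_aestronglyMeasurable hid.aestronglyMeasurable]
    simp only [hχ, Function.iterate_add_apply, mul_assoc]
  have h2 : ∫ z, z * χ z ∂m = ∫ z, Ψ (G^[i] z) ∂m := by
    refine integral_congr_ae ?_
    filter_upwards [ae_norm_eq_one] with z hz
    simp [hχ, ← mul_assoc, Complex.mul_conj, Complex.normSq_eq_norm_sq, hz]
  rw [h1, integral_mul_comp_iterate hmp hβ j hχi, h2,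
    (hmp.iterate i).integral_comp_aestronglyMeasurable hΨ.aestronglyMeasurable,
    Nat.add_sub_cancel]

theorem exists_integral_iterate_mul_conj (hmp : MeasurePreserving G m m)
    (hβ : ∀ φ : ℂ → ℂ, Integrable φ m → ∫ z, z * φ (G z) ∂m = β * ∫ z, z * φ z ∂m)
    {n l N : ℕ} (hn : n ≤ N) (hl : l ≤ N) :
    ∃ c : ℂ, ∀ Ψ : ℂ → ℂ, Integrable Ψ m →
      ∫ z, G^[n] z * starRingEnd ℂ (G^[l] z) * Ψ (G^[N] z) ∂m = c * ∫ z, Ψ z ∂m := by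
  rcases le_total n l with h | h
  · exact ⟨_, fun Ψ hΨ => integral_iterate_mul_conj_of_le hmp hβ h hl hΨ⟩
  · refine ⟨starRingEnd ℂ (β ^ (n - l)), fun Ψ hΨ => ?_⟩
    have hΨ' : Integrable (fun z => starRingEnd ℂ (Ψ z)) m := by
      refine hΨ.congr' (by fun_prop) (ae_of_all _ fun z => by simp)
    have h2 := congrArg (starRingEnd ℂ) (integral_iterate_mul_conj_of_le hmp hβ h hn hΨ')
    rw [← integral_conj, map_mul, ← integral_conj] at h2
    simp only [map_mul, Complex.conj_conj] at h2
    rw [← h2]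
    simp only [mul_comm]

/-- The squared modulus of a block of iterates is uncorrelated with functions of a later iterate. -/
theorem integral_block_mul_comp_iterate (hmp : MeasurePreserving G m m)
    (hβ : ∀ φ : ℂ → ℂ, Integrable φ m → ∫ z, z * φ (G z) ∂m = β * ∫ z, z * φ z ∂m)
    (a : ℕ → ℂ) {s : Finset ℕ} {N : ℕ} (hs : ∀ n ∈ s, n ≤ N) {Ψ : ℂ → ℝ} (hΨ : Integrable Ψ m) :
    ∫ z, ‖∑ n ∈ s, a n * G^[n] z‖ ^ 2 * Ψ (G^[N] z) ∂m
      = (∫ z, ‖∑ n ∈ s, a n * G^[n] z‖ ^ 2 ∂m) * ∫ z, Ψ z ∂m := by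
  have hex (n l : ℕ) : ∃ c : ℂ, n ∈ s → l ∈ s → ∀ Ψ : ℂ → ℂ, Integrable Ψ m →
      ∫ z, G^[n] z * starRingEnd ℂ (G^[l] z) * Ψ (G^[N] z) ∂m = c * ∫ z, Ψ z ∂m := by
    by_cases h : n ∈ s ∧ l ∈ s
    · obtain ⟨c, hc⟩ := exists_integral_iterate_mul_conj hmp hβ (hs n h.1) (hs l h.2)
      exact ⟨c, fun _ _ => hc⟩
    · exact ⟨0, fun h1 h2 => absurd ⟨h1, h2⟩ h⟩
  choose c hc using hex
  have main {Φ : ℂ → ℝ} (hΦ : Integrable Φ m) :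
      ((∫ z, ‖∑ n ∈ s, a n * G^[n] z‖ ^ 2 * Φ (G^[N] z) ∂m : ℝ) : ℂ)
        = (∑ n ∈ s, ∑ l ∈ s, a n * starRingEnd ℂ (a l) * c n l) * (∫ z, Φ z ∂m : ℝ) := by
    have hΦN : Integrable (fun z => (Φ (G^[N] z) : ℂ)) m :=
      ((hmp.iterate N).integrable_comp_of_integrable hΦ).ofReal
    have hint (n l : ℕ) :
        Integrable (fun z => G^[n] z * starRingEnd ℂ (G^[l] z) * (Φ (G^[N] z) : ℂ)) m := by
      have hn := (hmp.iterate n).measurable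
      have hl := (hmp.iterate l).measurable
      refine hΦN.bdd_mul (c := 1) (by fun_prop) ?_
      filter_upwards [ae_norm_iterate_eq_one hmp n, ae_norm_iterate_eq_one hmp l] with z h1 h2
      simp [h1, h2]
    have hexp (z : ℂ) : ((‖∑ n ∈ s, a n * G^[n] z‖ ^ 2 * Φ (G^[N] z) : ℝ) : ℂ)
        = ∑ n ∈ s, ∑ l ∈ s, a n * starRingEnd ℂ (a l) *
            (G^[n] z * starRingEnd ℂ (G^[l] z) * (Φ (G^[N] z) : ℂ)) := by
      rw [Complex.ofReal_mul, Complex.ofReal_pow, ← Complex.mul_conj', map_sum,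
        Finset.sum_mul_sum, Finset.sum_mul]
      refine Finset.sum_congr rfl fun n _ => ?_
      rw [Finset.sum_mul]
      refine Finset.sum_congr rfl fun l _ => ?_
      rw [map_mul]
      ring
    rw [← integral_complex_ofReal]
    simp only [hexp]
    rw [integral_finsetSum _ fun n _ => integrable_finsetSum _ fun l _ => (hint n l).const_mul _,
      Finset.sum_mul]
    refine Finset.sum_congr rfl fun n hn => ?_
    rw [integral_finsetSum _ fun l _ => (hint n l).const_mul _, Finset.sum_mul]
    refine Finset.sum_congr rfl fun l hl => ?_
    rw [integral_const_mul, hc n l hn hl (fun z => (Φ z : ℂ)) hΦ.ofReal, integral_complex_ofReal,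
      ← mul_assoc]
  have h1 := main (integrable_const (1 : ℝ))
  have h2 := main hΨ
  simp only [mul_one, integral_const, probReal_univ, smul_eq_mul, Complex.ofReal_one] at h1
  rw [← h1] at h2
  exact_mod_cast h2

theorem integrable_prod_block (hmp : MeasurePreserving G m m) {p : ℕ} (A : Fin p → Finset ℕ)
    (a : ℕ → ℂ) (d : ℕ → ℕ) :
    Integrable (fun z => ∏ k : Fin p, ‖∑ n ∈ A k, a n * G^[d n] z‖ ^ 2) m := by
  have hm (n : ℕ) : Measurable (G^[d n]) := (hmp.iterate (d n)).measurable
  refine Integrable.of_bound (Measurable.aestronglyMeasurable (by fun_prop))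
    (∏ k : Fin p, (∑ n ∈ A k, ‖a n‖) ^ 2) ?_
  filter_upwards [ae_all_iff.2 fun n => ae_norm_iterate_eq_one hmp n] with z hz
  rw [Real.norm_of_nonneg (by positivity)]
  refine Finset.prod_le_prod (fun _ _ => by positivity) fun k _ => ?_
  gcongr
  exact norm_sum_le_of_le _ fun n _ => by simp [hz]

theorem integral_prod_block (hmp : MeasurePreserving G m m)
    (hβ : ∀ φ : ℂ → ℂ, Integrable φ m → ∫ z, z * φ (G z) ∂m = β * ∫ z, z * φ z ∂m)
    (a : ℕ → ℂ) {p : ℕ} (A : Fin p → Finset ℕ) (hne : ∀ k, (A k).Nonempty)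
    (hsep : ∀ i j : Fin p, i < j → ∀ x ∈ A i, ∀ y ∈ A j, x < y) :
    ∫ z, ∏ k : Fin p, ‖∑ n ∈ A k, a n * G^[n] z‖ ^ 2 ∂m
      = ∏ k : Fin p, ∫ z, ‖∑ n ∈ A k, a n * G^[n] z‖ ^ 2 ∂m := by
  induction p with
  | zero => simp
  | succ p ih =>
    set N := (A 0).max' (hne 0) with hN
    set Ψ : ℂ → ℝ := fun w => ∏ k : Fin p, ‖∑ n ∈ A k.succ, a n * G^[n - N] w‖ ^ 2 with hΨdef
    have hΨ : Integrable Ψ m := integrable_prod_block hmp (fun k => A k.succ) a fun n => n - N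
    have hΨN (z : ℂ) : ∏ k : Fin p, ‖∑ n ∈ A k.succ, a n * G^[n] z‖ ^ 2 = Ψ (G^[N] z) := by
      refine Finset.prod_congr rfl fun k _ => ?_
      congr 2
      refine Finset.sum_congr rfl fun n hn => ?_
      rw [← Function.iterate_add_apply, Nat.sub_add_cancel
        (hsep 0 k.succ k.succ_pos _ ((A 0).max'_mem (hne 0)) n hn).le]
    have hmap := integral_map (hmp.iterate N).aemeasurable (f := Ψ)
      (by rw [(hmp.iterate N).map_eq]; exact hΨ.aestronglyMeasurable)
    rw [(hmp.iterate N).map_eq] at hmap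
    simp only [Fin.prod_univ_succ, hΨN]
    rw [integral_block_mul_comp_iterate hmp hβ a (fun n hn => (A 0).le_max' n hn) hΨ, hmap,
      ← ih (fun k => A k.succ) (fun k => hne _)
        (fun i j hij => hsep _ _ (Fin.succ_lt_succ_iff.2 hij))]
    simp only [hΨN]

end Koopman

theorem iterate_ae_eq {F G : ℂ → ℂ} (hmp : MeasurePreserving G m m) (hFG : F =ᵐ[m] G) (n : ℕ) :
    F^[n] =ᵐ[m] G^[n] := by
  induction n with
  | zero => rfl
  | succ n ih =>
    filter_upwards [ih, (hmp.iterate n).quasiMeasurePreserving.ae hFG] with z h1 h2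
    rw [Function.iterate_succ_apply', Function.iterate_succ_apply', h1, h2]

theorem stmt5 (f F : ℂ → ℂ)
    (hf : DifferentiableOn ℂ f (Metric.ball 0 1))
    (hmap : Set.MapsTo f (Metric.ball 0 1) (Metric.ball 0 1))
    (h0 : f 0 = 0)
    (hbd : ∀ᵐ z ∂m, Filter.Tendsto (fun r : ℝ => f ((r : ℂ) * z))
      (nhdsWithin 1 (Set.Iio 1)) (nhds (F z)))
    (hinner : ∀ᵐ z ∂m, ‖F z‖ = 1)
    (p : ℕ) (A : Fin p → Finset ℕ)
    (hpos : ∀ k, ∀ x ∈ A k, 0 < x)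
    (hsep : ∀ k : Fin p, ∀ h : (k : ℕ) + 1 < p,
      ∀ x ∈ A k, ∀ y ∈ A ⟨(k : ℕ) + 1, h⟩, x < y)
    (a : ℕ → ℂ) :
    ∫ z, ∏ k : Fin p, ‖∑ n ∈ A k, a n * F^[n] z‖ ^ 2 ∂m
      = ∏ k : Fin p, ∫ z, ‖∑ n ∈ A k, a n * F^[n] z‖ ^ 2 ∂m := by
  obtain ⟨G, -, hFG, hmp, β, hβ⟩ := exists_measurable_boundary_map hf hmap h0 hbd hinner
  have hiter : ∀ᵐ z ∂m, ∀ n, F^[n] z = G^[n] z := ae_all_iff.2 fun n => iterate_ae_eq hmp hFG n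
  by_cases hne : ∀ k, (A k).Nonempty
  · have hlhs : ∫ z, ∏ k : Fin p, ‖∑ n ∈ A k, a n * F^[n] z‖ ^ 2 ∂m
        = ∫ z, ∏ k : Fin p, ‖∑ n ∈ A k, a n * G^[n] z‖ ^ 2 ∂m :=
      integral_congr_ae (hiter.mono fun z hz => by simp only [hz])
    have hrhs (k : Fin p) : ∫ z, ‖∑ n ∈ A k, a n * F^[n] z‖ ^ 2 ∂m
        = ∫ z, ‖∑ n ∈ A k, a n * G^[n] z‖ ^ 2 ∂m :=
      integral_congr_ae (hiter.mono fun z hz => by simp only [hz])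
    have hlt (d : ℕ) : ∀ i j : Fin p, (i : ℕ) + d + 1 = j → ∀ x ∈ A i, ∀ y ∈ A j, x < y := by
      induction d with
      | zero =>
        rintro i ⟨_, hj⟩ rfl
        exact hsep i hj
      | succ d ih =>
        rintro i ⟨_, hj⟩ rfl x hx y hy
        have hl : (i : ℕ) + d + 1 < p := by omega
        obtain ⟨w, hw⟩ := hne ⟨(i : ℕ) + d + 1, hl⟩
        exact (ih i ⟨_, hl⟩ rfl x hx w hw).trans (hsep ⟨_, hl⟩ hj w hw y hy)
    simp only [hlhs, hrhs]
    refine integral_prod_block hmp hβ a A hne fun i j hij => hlt (j - i - 1) i j ?_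
    have : (i : ℕ) < j := hij
    omega
  · obtain ⟨k, hk⟩ := not_forall.1 hne
    rw [Finset.not_nonempty_iff_eq_empty] at hk
    rw [Finset.prod_eq_zero (Finset.mem_univ k) (by simp [hk])]
    have hz (z : ℂ) : ∏ k : Fin p, ‖∑ n ∈ A k, a n * F^[n] z‖ ^ 2 = 0 :=
      Finset.prod_eq_zero (Finset.mem_univ k) (by simp [hk])
    simp [hz]
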